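/- arXiv:1806.06429 — 2 statements merged into one kernel-verified Lean document; each statement's English description precedes it below -/
import Mathlib

section
/- There exists an absolute constant C > 0 such that for all positive integers n, d, k, every α > 0, and every linear map L : ℝ^{d×n} → ℝ^k, the total variation distance between the pushforward L#G₁ and the pushforward L#G₂[α] is at most C·α²·k/n. -/
open MeasureTheory ENNReal

/-- The ℓ_p norm of a vector in ℝ^n, for p ∈ [1,∞] (p : ℝ≥0∞),
with `lpNorm ∞ x = max_i |x i|`. -/
noncomputable def lpNorm (p : ℝ≥0∞) {n : ℕ} (x : Fin n → ℝ) : ℝ :=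
  if p = ∞ then ⨆ i, |x i| else (∑ i, |x i| ^ p.toReal) ^ (1 / p.toReal)

/-- The q→p operator norm of a real m×n matrix:
`opNorm q p A = sup_{x} ‖Ax‖_p / ‖x‖_q` (with the convention 0/0 = 0 at x = 0). -/
noncomputable def opNorm (q p : ℝ≥0∞) {m n : ℕ} (A : Matrix (Fin m) (Fin n) ℝ) : ℝ :=
  ⨆ x : Fin n → ℝ, lpNorm p (A.mulVec x) / lpNorm q x

instance matrixMeasurableSpace {m n : Type*} : MeasurableSpace (Matrix m n ℝ) :=
  MeasurableSpace.pi

/-- A linear map ℝ^{m×n} → ℝ^k, encoded by a k × (m·n) matrix, applied to a matrix A. -/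
def sketchApply {k m n : ℕ} (L : Matrix (Fin k) (Fin m × Fin n) ℝ)
    (A : Matrix (Fin m) (Fin n) ℝ) : Fin k → ℝ :=
  L.mulVec fun ij => A ij.1 ij.2

/-- `(S, f)` is a (k, α)-sketching family for the q→p norm of m×n matrices:
S (here μ) is a probability distribution over linear maps L : ℝ^{m×n} → ℝ^k and
f : ℝ^k → ℝ is measurable, such that for every m×n matrix A,
Pr_{L∼μ}[f(L(A)) ∈ (‖A‖_{q→p}/α, α‖A‖_{q→p})] ≥ 5/6. -/
def IsSketchingFamily (q p : ℝ≥0∞) (m n k : ℕ) (α : ℝ)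
    (μ : Measure (Matrix (Fin k) (Fin m × Fin n) ℝ)) (f : (Fin k → ℝ) → ℝ) : Prop :=
  IsProbabilityMeasure μ ∧ Measurable f ∧
  ∀ A : Matrix (Fin m) (Fin n) ℝ,
    (5/6 : ℝ≥0∞) ≤ μ {L | f (sketchApply L A) ∈
      Set.Ioo (opNorm q p A / α) (α * opNorm q p A)}

/-- Total variation distance between two measures: sup over measurable sets E of |μ(E) − ν(E)|. -/
noncomputable def tvDist {Ω : Type*} [MeasurableSpace Ω] (μ ν : Measure Ω) : ℝ :=
  ⨆ s : {s : Set Ω // MeasurableSet s}, |(μ s.1).toReal - (ν s.1).toReal|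

/-- The uniform distribution on Fin n. -/
noncomputable def uniformFin (n : ℕ) : Measure (Fin n) :=
  ((n : ℝ≥0∞))⁻¹ • ∑ i : Fin n, Measure.dirac i

/-- G₁: the distribution of an m×n random matrix with i.i.d. standard Gaussian entries. -/
noncomputable def gaussianMatrix (m n : ℕ) : Measure (Matrix (Fin m) (Fin n) ℝ) :=
  Measure.pi fun _ : Fin m => Measure.pi fun _ : Fin n => ProbabilityTheory.gaussianReal 0 1

/-- The distribution of a standard Gaussian vector in ℝ^m. -/
noncomputable def gaussianVec (m : ℕ) : Measure (Fin m → ℝ) :=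
  Measure.pi fun _ : Fin m => ProbabilityTheory.gaussianReal 0 1

/-- G₂[α]: the distribution of G + α·u·e_iᵀ where G is an i.i.d. standard Gaussian m×n
matrix, u ∈ ℝ^m an independent standard Gaussian vector, and the column index i is
uniform on Fin n, independent of (G, u). -/
noncomputable def spikedGaussian (m n : ℕ) (α : ℝ) : Measure (Matrix (Fin m) (Fin n) ℝ) :=
  Measure.map (fun x : Matrix (Fin m) (Fin n) ℝ × ((Fin m → ℝ) × Fin n) =>
      x.1 + Matrix.of fun a b => if b = x.2.2 then α * x.2.1 a else 0)
    ((gaussianMatrix m n).prod ((gaussianVec m).prod (uniformFin n)))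

theorem MeasureTheory.Measure.pi_withDensity {ι : Type*} [Fintype ι] {X : ι → Type*}
    [∀ i, MeasurableSpace (X i)] (μ : ∀ i, Measure (X i)) [∀ i, IsProbabilityMeasure (μ i)]
    {f : ∀ i, X i → ℝ≥0∞} (hf : ∀ i, Measurable (f i))
    [∀ i, SigmaFinite ((μ i).withDensity (f i))] :
    Measure.pi (fun i => (μ i).withDensity (f i)) =
      (Measure.pi μ).withDensity (fun x => ∏ i, f i (x i)) := by
  refine (Measure.pi_eq fun s hs => ?_)
  have hfs : ∀ i, Measurable ((s i).indicator (f i)) := fun i => (hf i).indicator (hs i)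
  have hrect : MeasurableSet (Set.univ.pi s) := MeasurableSet.univ_pi hs
  rw [withDensity_apply _ hrect, ← lintegral_indicator hrect]
  have hprod : (Set.univ.pi s).indicator (fun x => ∏ i, f i (x i)) =
      fun x => ∏ i, (s i).indicator (f i) (x i) := by
    ext x
    by_cases hx : x ∈ Set.univ.pi s
    · rw [Set.indicator_of_mem hx]
      exact Finset.prod_congr rfl fun i _ => (Set.indicator_of_mem (hx i trivial) _).symm
    · rw [Set.indicator_of_notMem hx]
      obtain ⟨i, hi⟩ : ∃ i, x i ∉ s i := by simpa using hx
      exact (Finset.prod_eq_zero (Finset.mem_univ i) (Set.indicator_of_notMem hi _)).symm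
  rw [hprod, ProbabilityTheory.lintegral_prod_eq_prod_lintegral_of_indepFun Finset.univ
    (fun i (x : ∀ i, X i) => (s i).indicator (f i) (x i))
    (ProbabilityTheory.iIndepFun_pi fun i => (hfs i).aemeasurable)
    (fun i => (hfs i).comp (measurable_pi_apply i))]
  refine Finset.prod_congr rfl fun i _ => ?_
  rw [(measurePreserving_eval μ i).lintegral_comp (hfs i), lintegral_indicator (hs i),
    withDensity_apply _ (hs i)]

theorem gaussianReal_map_add_const_eq_withDensity (c : ℝ) :
    (ProbabilityTheory.gaussianReal 0 1).map (· + c) =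
      (ProbabilityTheory.gaussianReal 0 1).withDensity
        (fun x => ENNReal.ofReal (Real.exp (c * x - c ^ 2 / 2))) := by
  rw [ProbabilityTheory.gaussianReal_map_add_const,
    ProbabilityTheory.gaussianReal_of_var_ne_zero _ one_ne_zero,
    ProbabilityTheory.gaussianReal_of_var_ne_zero _ one_ne_zero, ← withDensity_mul _
      (ProbabilityTheory.measurable_gaussianPDF _ _) (by fun_prop)]
  congr 1
  ext x
  simp only [Pi.mul_apply, ProbabilityTheory.gaussianPDF]
  rw [← ENNReal.ofReal_mul (ProbabilityTheory.gaussianPDFReal_nonneg _ _ _)]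
  simp only [ProbabilityTheory.gaussianPDFReal]
  rw [mul_assoc _ (Real.exp _), ← Real.exp_add]
  congr 3
  push_cast
  ring

/-- Translating an independent Gaussian matrix by `V` tilts its law by the Cameron–Martin
density. -/
theorem gaussianMatrix_map_add_eq_withDensity {d n : ℕ} (V : Matrix (Fin d) (Fin n) ℝ) :
    (gaussianMatrix d n).map (· + V) = (gaussianMatrix d n).withDensity
      (fun x => ENNReal.ofReal
        (Real.exp (∑ a, ∑ b, V a b * x a b - (∑ a, ∑ b, V a b ^ 2) / 2))) := by
  have hprob : ∀ c : ℝ, IsProbabilityMeasure ((ProbabilityTheory.gaussianReal 0 1).withDensity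
      (fun x => ENNReal.ofReal (Real.exp (c * x - c ^ 2 / 2)))) := fun c => by
    rw [← gaussianReal_map_add_const_eq_withDensity]
    exact Measure.isProbabilityMeasure_map (by fun_prop)
  have hrow : ∀ v : Fin n → ℝ, (Measure.pi fun _ : Fin n =>
      ProbabilityTheory.gaussianReal 0 1).map (· + v) =
        (Measure.pi fun _ : Fin n => ProbabilityTheory.gaussianReal 0 1).withDensity
          (fun x => ∏ b, ENNReal.ofReal (Real.exp (v b * x b - v b ^ 2 / 2))) := fun v => by
    rw [← Measure.pi_withDensity (fun _ : Fin n => ProbabilityTheory.gaussianReal 0 1)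
      (f := fun b x => ENNReal.ofReal (Real.exp (v b * x - v b ^ 2 / 2))) (fun b => by fun_prop)]
    simp_rw [← gaussianReal_map_add_const_eq_withDensity]
    exact Measure.pi_map_pi (f := fun b x => x + v b) (fun b => by fun_prop)
  have hprob' : ∀ v : Fin n → ℝ, IsProbabilityMeasure
      ((Measure.pi fun _ : Fin n => ProbabilityTheory.gaussianReal 0 1).withDensity
          (fun x => ∏ b, ENNReal.ofReal (Real.exp (v b * x b - v b ^ 2 / 2)))) := fun v => by
    rw [← hrow]
    exact Measure.isProbabilityMeasure_map (by fun_prop)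
  have hdens : (fun x : Matrix (Fin d) (Fin n) ℝ => ENNReal.ofReal
        (Real.exp (∑ a, ∑ b, V a b * x a b - (∑ a, ∑ b, V a b ^ 2) / 2))) =
      fun x => ∏ a, ∏ b, ENNReal.ofReal (Real.exp (V a b * x a b - V a b ^ 2 / 2)) := by
    ext x
    simp_rw [← ENNReal.ofReal_prod_of_nonneg (fun _ _ => (Real.exp_pos _).le), ← Real.exp_sum]
    rw [← ENNReal.ofReal_prod_of_nonneg (fun _ _ => (Real.exp_pos _).le), ← Real.exp_sum]
    simp_rw [Finset.sum_sub_distrib, Finset.sum_div]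
  rw [hdens]
  have : ∀ a, SigmaFinite
      ((Measure.pi fun _ : Fin n => ProbabilityTheory.gaussianReal 0 1).withDensity
        (fun x => ∏ b, ENNReal.ofReal (Real.exp (V a b * x b - V a b ^ 2 / 2)))) :=
    fun a => have := hprob' (V a); inferInstance
  refine Eq.trans ?_ (Measure.pi_withDensity (fun _ : Fin d => Measure.pi fun _ : Fin n =>
    ProbabilityTheory.gaussianReal 0 1)
    (f := fun a x => ∏ b, ENNReal.ofReal (Real.exp (V a b * x b - V a b ^ 2 / 2)))
    (fun a => by fun_prop))
  simp_rw [← hrow]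
  exact Measure.pi_map_pi (f := fun a x => x + V a) (fun a => by fun_prop)

instance (d n : ℕ) : IsProbabilityMeasure (gaussianMatrix d n) :=
  inferInstanceAs (IsProbabilityMeasure (Measure.pi fun _ : Fin d => Measure.pi fun _ : Fin n =>
    ProbabilityTheory.gaussianReal 0 1))

instance (d : ℕ) : IsProbabilityMeasure (gaussianVec d) := by
  unfold gaussianVec; infer_instance

theorem measurable_matrix_entry {m n : Type*} (a : m) (b : n) :
    Measurable fun A : Matrix m n ℝ => A a b :=
  Measurable.eval (X := fun _ : n => ℝ) (g := fun A : m → n → ℝ => A a)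
    (measurable_pi_apply a)

theorem measurable_matrix_of_entries {Ω m n : Type*} [MeasurableSpace Ω] {f : Ω → Matrix m n ℝ}
    (hf : ∀ a b, Measurable fun ω => f ω a b) : Measurable f :=
  measurable_pi_lambda (X := fun _ : m => n → ℝ) f fun a => measurable_pi_lambda _ fun b => hf a b

theorem measurable_matrix_add_const {m n : Type*} (V : Matrix m n ℝ) :
    Measurable fun A : Matrix m n ℝ => A + V :=
  measurable_matrix_of_entries fun a b => (measurable_matrix_entry a b).add_const (V a b)

/-- The symmetric two-point mixture of translates of a Gaussian measure dominates
`exp (-‖V‖² / 2)` times that measure. -/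
theorem exp_mul_gaussianMatrix_le {d n : ℕ} (V : Matrix (Fin d) (Fin n) ℝ)
    {A : Set (Matrix (Fin d) (Fin n) ℝ)} (hA : MeasurableSet A) :
    2 * (ENNReal.ofReal (Real.exp (-(∑ a, ∑ b, V a b ^ 2) / 2)) * gaussianMatrix d n A) ≤
      gaussianMatrix d n ((· + V) ⁻¹' A) + gaussianMatrix d n ((· + -V) ⁻¹' A) := by
  have htilt : ∀ W : Matrix (Fin d) (Fin n) ℝ, Measurable fun x : Matrix (Fin d) (Fin n) ℝ =>
      ENNReal.ofReal (Real.exp (∑ a, ∑ b, W a b * x a b - (∑ a, ∑ b, W a b ^ 2) / 2)) := by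
    intro W
    have := fun a b => measurable_matrix_entry (m := Fin d) (n := Fin n) a b
    fun_prop
  have hneg : ∑ a, ∑ b, (-V) a b ^ 2 = ∑ a, ∑ b, V a b ^ 2 := by simp
  rw [← Measure.map_apply (measurable_matrix_add_const V) hA,
    ← Measure.map_apply (measurable_matrix_add_const (-V)) hA,
    gaussianMatrix_map_add_eq_withDensity, gaussianMatrix_map_add_eq_withDensity,
    withDensity_apply _ hA, withDensity_apply _ hA, ← lintegral_add_left (htilt V),
    ← setLIntegral_const, ← lintegral_const_mul _ measurable_const]
  refine lintegral_mono fun x => ?_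
  rw [← ENNReal.ofReal_add (Real.exp_pos _).le (Real.exp_pos _).le, ← ENNReal.ofReal_ofNat,
    ← ENNReal.ofReal_mul zero_le_two, hneg]
  refine ENNReal.ofReal_le_ofReal ?_
  have hcosh := Real.one_le_cosh (∑ a, ∑ b, V a b * x a b)
  rw [Real.cosh_eq] at hcosh
  simp only [Matrix.neg_apply, neg_mul, Finset.sum_neg_distrib, sub_eq_add_neg, Real.exp_add,
    ← add_mul, neg_div]
  gcongr
  linarith

/-- Every linear sketch factors through an orthogonal projection of Frobenius norm at most the
square root of the sketch dimension. -/
theorem exists_mul_eq_self_sum_sq_le {k ι : Type*} [Fintype k] [Fintype ι] [DecidableEq ι]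
    (L : Matrix k ι ℝ) :
    ∃ P : Matrix ι ι ℝ, L * P = L ∧ ∑ p, ∑ q, P p q ^ 2 ≤ Fintype.card k := by
  classical
  let T := Matrix.toEuclideanLin L
  let K := (LinearMap.ker T)ᗮ
  let e : ι → EuclideanSpace ℝ ι := fun q => EuclideanSpace.single q 1
  refine ⟨Matrix.of fun p q => K.starProjection (e q) p, ?_, ?_⟩
  · have hT : ∀ x, T (K.starProjection x) = T x := fun x => by
      have hx : x - K.starProjection x ∈ Kᗮ := K.sub_starProjection_mem_orthogonal x
      rw [Submodule.orthogonal_orthogonal, LinearMap.mem_ker, map_sub, sub_eq_zero] at hx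
      exact hx.symm
    ext j q
    have hjq := congrArg (fun y : EuclideanSpace ℝ k => y j) (hT (e q))
    simpa [T, e, Matrix.toLpLin_apply, Matrix.mul_apply, Matrix.mulVec, dotProduct] using hjq
  · have hproj : LinearMap.IsProj K (K.starProjection : EuclideanSpace ℝ ι →ₗ[ℝ] _) :=
      ⟨fun x => K.starProjection_apply_mem x, fun x hx => K.starProjection_eq_self_iff.2 hx⟩
    have htrace := hproj.trace
    rw [LinearMap.trace_eq_sum_inner _ (EuclideanSpace.basisFun ι ℝ)] at htrace
    have hcol : ∀ q, ∑ p, K.starProjection (e q) p ^ 2 =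
        inner ℝ (e q) (K.starProjection (e q)) := fun q => by
      rw [← EuclideanSpace.real_norm_sq_eq, ← real_inner_self_eq_norm_sq,
        K.inner_starProjection_left_eq_right,
        K.starProjection_eq_self_iff.2 (K.starProjection_apply_mem _)]
    have hrank : Module.finrank ℝ K ≤ Fintype.card k := by
      have horth := (LinearMap.ker T).finrank_add_finrank_orthogonal
      change _ + Module.finrank ℝ K = _ at horth
      have hnull := T.finrank_range_add_finrank_ker
      have hrange := (LinearMap.range T).finrank_le
      rw [finrank_euclideanSpace] at hrange
      omega
    rw [Finset.sum_comm]
    simp only [Matrix.of_apply, hcol]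
    calc _ = (Module.finrank ℝ K : ℝ) := by rw [← htrace]; simp [e]
      _ ≤ _ := by exact_mod_cast hrank

theorem integral_sq_sum_gaussianVec {d : ℕ} (c : Fin d → ℝ) :
    Integrable (fun u => (∑ a, c a * u a) ^ 2) (gaussianVec d) ∧
      ∫ u, (∑ a, c a * u a) ^ 2 ∂gaussianVec d = ∑ a, c a ^ 2 := by
  have hL : ∀ a, MemLp (fun x : ℝ => c a * x) 2 (ProbabilityTheory.gaussianReal 0 1) := fun a =>
    (ProbabilityTheory.memLp_id_gaussianReal' 2 (by simp)).const_mul (c a)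
  have hmem : ∀ a, MemLp (fun u : Fin d → ℝ => c a * u a) 2 (gaussianVec d) := fun a =>
    (hL a).comp_measurePreserving (measurePreserving_eval _ a)
  have hsum : MemLp (fun u : Fin d → ℝ => ∑ a, c a * u a) 2 (gaussianVec d) :=
    memLp_finsetSum _ fun a _ => hmem a
  refine ⟨hsum.integrable_sq, ?_⟩
  have hmean : ∫ u, ∑ a, c a * u a ∂gaussianVec d = 0 := by
    rw [integral_finsetSum _ fun a _ => (hmem a).integrable one_le_two]
    refine Finset.sum_eq_zero fun a _ => ?_
    rw [integral_const_mul]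
    unfold gaussianVec
    rw [integral_eval]
    simp
  have hvar := ProbabilityTheory.variance_sum_pi hL
  have hfun : (∑ a, fun u : Fin d → ℝ => c a * u a) = fun u => ∑ a, c a * u a := by
    ext u; simp
  rw [hfun] at hvar
  change ProbabilityTheory.variance _ (gaussianVec d) = _ at hvar
  rw [ProbabilityTheory.variance_of_integral_eq_zero hsum.aemeasurable hmean] at hvar
  rw [hvar]
  refine Finset.sum_congr rfl fun a _ => ?_
  rw [ProbabilityTheory.variance_const_mul]
  simp

theorem gaussianVec_map_neg (d : ℕ) : (gaussianVec d).map (fun u => -u) = gaussianVec d := by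
  refine (Measure.pi_map_pi (μ := fun _ : Fin d => ProbabilityTheory.gaussianReal 0 1)
    (f := fun _ x => -x) (fun _ => by fun_prop)).trans ?_
  simp [ProbabilityTheory.gaussianReal_map_neg, gaussianVec]

theorem isProbabilityMeasure_uniformFin {n : ℕ} (hn : 0 < n) :
    IsProbabilityMeasure (uniformFin n) := by
  refine ⟨?_⟩
  simp [uniformFin, ENNReal.inv_mul_cancel, hn.ne']

theorem tvDist_le_of_forall_sub_le {Ω : Type*} [MeasurableSpace Ω] {μ ν : Measure Ω}
    [IsProbabilityMeasure μ] [IsProbabilityMeasure ν] {δ : ℝ}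
    (h : ∀ s, MeasurableSet s → μ.real s - ν.real s ≤ δ) : tvDist μ ν ≤ δ := by
  have : Nonempty {s : Set Ω // MeasurableSet s} := ⟨⟨∅, .empty⟩⟩
  refine ciSup_le fun s => abs_sub_le_iff.2 ⟨h s.1 s.2, ?_⟩
  have hcompl := h s.1ᶜ s.2.compl
  rw [probReal_compl_eq_one_sub s.2, probReal_compl_eq_one_sub s.2] at hcompl
  change ν.real s.1 - μ.real s.1 ≤ δ
  linarith

/-- The matrix whose `i`-th column is `α • u` and whose other columns vanish. -/
def spikeMatrix {d n : ℕ} (α : ℝ) (u : Fin d → ℝ) (i : Fin n) : Matrix (Fin d) (Fin n) ℝ :=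
  Matrix.of fun a b => if b = i then α * u a else 0

theorem spikeMatrix_neg {d n : ℕ} (α : ℝ) (u : Fin d → ℝ) (i : Fin n) :
    spikeMatrix α (-u) i = -spikeMatrix α u i := by
  ext a b
  by_cases h : b = i <;> simp [spikeMatrix, h]

theorem measurable_spikeMatrix_entry {d n : ℕ} (α : ℝ) (a : Fin d) (b : Fin n) :
    Measurable fun x : (Fin d → ℝ) × Fin n => spikeMatrix α x.1 x.2 a b := by
  refine measurable_from_prod_countable_left fun i => ?_
  by_cases h : b = i <;> simp only [spikeMatrix, Matrix.of_apply, h, if_true, if_false] <;> fun_prop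

theorem measurable_add_spikeMatrix {d n : ℕ} (α : ℝ) :
    Measurable fun x : Matrix (Fin d) (Fin n) ℝ × ((Fin d → ℝ) × Fin n) =>
      x.1 + spikeMatrix α x.2.1 x.2.2 :=
  measurable_matrix_of_entries fun a b => ((measurable_matrix_entry a b).comp measurable_fst).add
    ((measurable_spikeMatrix_entry α a b).comp measurable_snd)

theorem measurable_gaussianMatrix_preimage_add_spikeMatrix {d n : ℕ} (α : ℝ)
    {A : Set (Matrix (Fin d) (Fin n) ℝ)} (hA : MeasurableSet A) :
    Measurable fun x : (Fin d → ℝ) × Fin n =>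
      gaussianMatrix d n ((· + spikeMatrix α x.1 x.2) ⁻¹' A) :=
  measurable_measure_prodMk_right (measurable_add_spikeMatrix α hA)

theorem measurable_gaussianMatrix_preimage_add_spikeMatrix_column {d n : ℕ} (α : ℝ) (i : Fin n)
    {A : Set (Matrix (Fin d) (Fin n) ℝ)} (hA : MeasurableSet A) :
    Measurable fun u : Fin d → ℝ =>
      gaussianMatrix d n ((· + spikeMatrix α u i) ⁻¹' A) := by
  have hpair : Measurable fun u : Fin d → ℝ => (u, i) := measurable_prodMk_right
  have hcomp := (measurable_gaussianMatrix_preimage_add_spikeMatrix α hA).comp hpair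
  exact hcomp

theorem measurable_sketchApply {k m n : ℕ} (L : Matrix (Fin k) (Fin m × Fin n) ℝ) :
    Measurable (sketchApply L) := by
  refine measurable_pi_lambda _ fun j => ?_
  have := fun a b => measurable_matrix_entry (m := Fin m) (n := Fin n) a b
  simp only [sketchApply, Matrix.mulVec, dotProduct]
  fun_prop

theorem sketchApply_add {k m n : ℕ} (L : Matrix (Fin k) (Fin m × Fin n) ℝ)
    (A B : Matrix (Fin m) (Fin n) ℝ) :
    sketchApply L (A + B) = sketchApply L A + sketchApply L B :=
  L.mulVec_add _ _

theorem sketchApply_neg {k m n : ℕ} (L : Matrix (Fin k) (Fin m × Fin n) ℝ)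
    (A : Matrix (Fin m) (Fin n) ℝ) : sketchApply L (-A) = -sketchApply L A :=
  L.mulVec_neg _

theorem ofReal_one_sub_integral_le_lintegral_exp {Ω : Type*} [MeasurableSpace Ω] {μ : Measure Ω}
    [IsProbabilityMeasure μ] {q : Ω → ℝ} (hq : Integrable q μ) (hq0 : ∀ ω, 0 ≤ q ω) :
    ENNReal.ofReal (1 - (∫ ω, q ω ∂μ) / 2) ≤
      ∫⁻ ω, ENNReal.ofReal (Real.exp (-q ω / 2)) ∂μ := by
  have hexp : Integrable (fun ω => Real.exp (-q ω / 2)) μ := by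
    refine Integrable.of_bound (C := 1) ?_ (Filter.Eventually.of_forall fun ω => ?_)
    · exact Real.continuous_exp.comp_aestronglyMeasurable (hq.neg.div_const 2).aestronglyMeasurable
    · rw [Real.norm_eq_abs, abs_of_pos (Real.exp_pos _), Real.exp_le_one_iff]
      linarith [hq0 ω]
  rw [← ofReal_integral_eq_lintegral_ofReal hexp
    (Filter.Eventually.of_forall fun ω => (Real.exp_pos _).le)]
  refine ENNReal.ofReal_le_ofReal ?_
  have hlin : ∫ ω, (1 - q ω / 2) ∂μ = 1 - (∫ ω, q ω ∂μ) / 2 := by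
    rw [integral_sub (integrable_const _) (hq.div_const 2), integral_div]
    simp
  rw [← hlin]
  refine integral_mono ((integrable_const _).sub (hq.div_const 2)) hexp fun ω => ?_
  have := Real.add_one_le_exp (-q ω / 2)
  simp only
  linarith

/-- If `L * P = L`, then spiking column `i` by an independent Gaussian vector shrinks the
probability of an event of the sketch at most by a factor controlled by the squared entries of `P`
in the columns indexed by `i`. -/
theorem ofReal_mul_gaussianMatrix_le_lintegral_spike {d n k : ℕ} (α : ℝ)
    {L : Matrix (Fin k) (Fin d × Fin n) ℝ} {P : Matrix (Fin d × Fin n) (Fin d × Fin n) ℝ}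
    (hP : L * P = L) (i : Fin n) {s : Set (Fin k → ℝ)} (hs : MeasurableSet s) :
    ENNReal.ofReal (1 - α ^ 2 * (∑ p, ∑ c, P p (c, i) ^ 2) / 2) *
        gaussianMatrix d n (sketchApply L ⁻¹' s) ≤
      ∫⁻ u, gaussianMatrix d n ((· + spikeMatrix α u i) ⁻¹' (sketchApply L ⁻¹' s))
        ∂gaussianVec d := by
  set A := sketchApply L ⁻¹' s with hAdef
  have hA : MeasurableSet A := measurable_sketchApply L hs
  let V : (Fin d → ℝ) → Matrix (Fin d) (Fin n) ℝ := fun u =>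
    Matrix.of fun a b => ∑ c, α * P (a, b) (c, i) * u c
  let m : (Fin d → ℝ) → ℝ≥0∞ := fun u => gaussianMatrix d n ((· + spikeMatrix α u i) ⁻¹' A)
  let q : (Fin d → ℝ) → ℝ := fun u => ∑ a, ∑ b, V u a b ^ 2
  have hV : ∀ u, sketchApply L (spikeMatrix α u i) = sketchApply L (V u) := fun u => by
    have hPV : (fun p : Fin d × Fin n => V u p.1 p.2) =
        P.mulVec fun p => spikeMatrix α u i p.1 p.2 := by
      ext p
      simp only [V, spikeMatrix, Matrix.mulVec, dotProduct, Matrix.of_apply,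
        Fintype.sum_prod_type, mul_ite, mul_zero, Finset.sum_ite_eq',
        Finset.mem_univ, if_true]
      exact Finset.sum_congr rfl fun c _ => by ring
    simp only [sketchApply]
    rw [hPV, Matrix.mulVec_mulVec, hP]
  have hm : Measurable m := measurable_gaussianMatrix_preimage_add_spikeMatrix_column α i hA
  have hmneg : ∫⁻ u, m (-u) ∂gaussianVec d = ∫⁻ u, m u ∂gaussianVec d := by
    conv_rhs => rw [← gaussianVec_map_neg, lintegral_map hm measurable_neg]
  have hpoint : ∀ u, 2 * (ENNReal.ofReal (Real.exp (-q u / 2)) * gaussianMatrix d n A) ≤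
      m u + m (-u) := fun u => by
    have hpos : (· + spikeMatrix α u i) ⁻¹' A = (· + V u) ⁻¹' A := by
      ext x; simp [hAdef, sketchApply_add, hV]
    have hneg : (· + spikeMatrix α (-u) i) ⁻¹' A = (· + -V u) ⁻¹' A := by
      ext x; simp [hAdef, sketchApply_add, sketchApply_neg, hV, spikeMatrix_neg]
    simp only [m, hpos, hneg]
    exact exp_mul_gaussianMatrix_le (V u) hA
  have hqi : ∀ a b, Integrable (fun u => V u a b ^ 2) (gaussianVec d) := fun a b =>
    (integral_sq_sum_gaussianVec fun c => α * P (a, b) (c, i)).1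
  have hVint : ∀ a b, ∫ u, V u a b ^ 2 ∂gaussianVec d = ∑ c, (α * P (a, b) (c, i)) ^ 2 :=
    fun a b => (integral_sq_sum_gaussianVec fun c => α * P (a, b) (c, i)).2
  have hq : Integrable q (gaussianVec d) :=
    integrable_finsetSum _ fun a _ => integrable_finsetSum _ fun b _ => hqi a b
  have hqint : ∫ u, q u ∂gaussianVec d = α ^ 2 * ∑ p, ∑ c, P p (c, i) ^ 2 := by
    simp only [q]
    rw [integral_finsetSum _ fun a _ => integrable_finsetSum _ fun b _ => hqi a b,
      Fintype.sum_prod_type, Finset.mul_sum]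
    refine Finset.sum_congr rfl fun a _ => ?_
    rw [integral_finsetSum _ fun b _ => hqi a b, Finset.mul_sum]
    refine Finset.sum_congr rfl fun b _ => ?_
    rw [hVint]
    simp only [mul_pow, Finset.mul_sum]
  have hq0 : ∀ u, 0 ≤ q u := fun u =>
    Finset.sum_nonneg fun a _ => Finset.sum_nonneg fun b _ => sq_nonneg _
  have hfirst := ofReal_one_sub_integral_le_lintegral_exp hq hq0
  rw [hqint] at hfirst
  have htwo : 2 * ((∫⁻ u, ENNReal.ofReal (Real.exp (-q u / 2)) ∂gaussianVec d) *
      gaussianMatrix d n A) ≤ 2 * ∫⁻ u, m u ∂gaussianVec d := by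
    calc _ = ∫⁻ u, 2 * (ENNReal.ofReal (Real.exp (-q u / 2)) * gaussianMatrix d n A)
          ∂gaussianVec d := by
          rw [lintegral_const_mul' _ _ ENNReal.ofNat_ne_top,
            lintegral_mul_const' _ _ (measure_ne_top _ _)]
      _ ≤ ∫⁻ u, m u + m (-u) ∂gaussianVec d := lintegral_mono hpoint
      _ = 2 * ∫⁻ u, m u ∂gaussianVec d := by rw [lintegral_add_left hm, hmneg, two_mul]
  exact (mul_le_mul' hfirst le_rfl).trans
    ((ENNReal.mul_le_mul_iff_right two_ne_zero ENNReal.ofNat_ne_top).1 htwo)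

theorem spikedGaussian_apply {d n : ℕ} (hn : 0 < n) (α : ℝ)
    {A : Set (Matrix (Fin d) (Fin n) ℝ)} (hA : MeasurableSet A) :
    spikedGaussian d n α A = (n : ℝ≥0∞)⁻¹ * ∑ i, ∫⁻ u,
      gaussianMatrix d n ((· + spikeMatrix α u i) ⁻¹' A) ∂gaussianVec d := by
  have := isProbabilityMeasure_uniformFin hn
  have hm := measurable_gaussianMatrix_preimage_add_spikeMatrix α hA
  refine (Measure.map_apply (measurable_add_spikeMatrix α) hA).trans ?_
  rw [Measure.prod_apply_symm (measurable_add_spikeMatrix α hA)]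
  refine (lintegral_prod_symm _ hm.aemeasurable).trans ?_
  rw [uniformFin, lintegral_smul_measure, lintegral_finsetSum_measure]
  simp only [lintegral_dirac, smul_eq_mul]

/-- There is an absolute constant C > 0 such that for all positive n, d, k, every α > 0
and every linear sketch L : ℝ^{d×n} → ℝ^k, the total variation distance between the
pushforwards of G₁ (i.i.d. Gaussian d×n matrix) and G₂[α] (Gaussian matrix with a random
column spiked by α·u for Gaussian u) under L is at most C·α²·k/n. -/
theorem tv_dist_sketch_spiked_column :
    ∃ C : ℝ, 0 < C ∧
      ∀ (d n k : ℕ), 0 < d → 0 < n → 0 < k → ∀ α : ℝ, 0 < α →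
        ∀ L : Matrix (Fin k) (Fin d × Fin n) ℝ,
          tvDist ((gaussianMatrix d n).map (sketchApply L))
              ((spikedGaussian d n α).map (sketchApply L))
            ≤ C * α ^ 2 * k / n := by
  refine ⟨1 / 2, by norm_num, fun d n k _ hn _ α _ L => ?_⟩
  obtain ⟨P, hP, hPk⟩ := exists_mul_eq_self_sum_sq_le L
  have := isProbabilityMeasure_uniformFin hn
  have hLm := measurable_sketchApply L
  have hprob : IsProbabilityMeasure (spikedGaussian d n α) :=
    Measure.isProbabilityMeasure_map (measurable_add_spikeMatrix α).aemeasurable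
  have := Measure.isProbabilityMeasure_map (μ := gaussianMatrix d n) hLm.aemeasurable
  have := Measure.isProbabilityMeasure_map (μ := spikedGaussian d n α) hLm.aemeasurable
  refine tvDist_le_of_forall_sub_le fun s hs => ?_
  rw [map_measureReal_apply hLm hs, map_measureReal_apply hLm hs]
  set A := sketchApply L ⁻¹' s
  set g := (gaussianMatrix d n).real A with hg
  have hg1 : g ≤ 1 := measureReal_le_one
  have hg0 : 0 ≤ g := measureReal_nonneg
  have hnpos : (0 : ℝ) < n := by exact_mod_cast hn
  let x : Fin n → ℝ := fun i => α ^ 2 * (∑ p, ∑ c, P p (c, i) ^ 2) / 2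
  have hsumx : ∑ i, x i ≤ α ^ 2 * k / 2 := by
    have hswap : ∑ i, ∑ p, ∑ c, P p (c, i) ^ 2 = ∑ p, ∑ q, P p q ^ 2 := by
      rw [Finset.sum_comm]
      exact Finset.sum_congr rfl fun p _ => by rw [Fintype.sum_prod_type_right]
    simp only [x]
    rw [← Finset.sum_div, ← Finset.mul_sum, hswap]
    rw [Fintype.card_fin] at hPk
    gcongr
  have hlower : (n : ℝ≥0∞)⁻¹ * ∑ i, ENNReal.ofReal (1 - x i) * gaussianMatrix d n A ≤
      spikedGaussian d n α A := by
    rw [spikedGaussian_apply hn α (hLm hs)]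
    gcongr with i
    exact ofReal_mul_gaussianMatrix_le_lintegral_spike α hP i hs
  have hreal : (n : ℝ)⁻¹ * ∑ i, (1 - x i) * g ≤ (spikedGaussian d n α).real A := by
    refine le_trans ?_ (ENNReal.toReal_mono (measure_ne_top _ _) hlower)
    rw [ENNReal.toReal_mul, ENNReal.toReal_sum fun i _ =>
      ENNReal.mul_ne_top ENNReal.ofReal_ne_top (measure_ne_top _ _)]
    simp only [ENNReal.toReal_mul, ENNReal.toReal_inv, ENNReal.toReal_natCast]
    gcongr with i
    · exact (le_max_left _ _).trans_eq ENNReal.toReal_ofReal'.symm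
    · exact hg.le
  have hexpand : (n : ℝ)⁻¹ * ∑ i, (1 - x i) * g = g - (∑ i, x i) * g / n := by
    rw [← Finset.sum_mul, Finset.sum_sub_distrib]
    simp only [Finset.sum_const, Finset.card_univ, Fintype.card_fin, nsmul_eq_mul, mul_one]
    field_simp
  have hx0 : 0 ≤ ∑ i, x i := Finset.sum_nonneg fun i _ => by positivity
  have hbound : (∑ i, x i) * g / n ≤ 1 / 2 * α ^ 2 * k / n := by
    refine div_le_div_of_nonneg_right ?_ hnpos.le
    linarith [mul_le_of_le_one_right hx0 hg1]
  linarith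
end

section
/- Let n be a positive integer and let B be a positive integer dividing n. Partition [n] into consecutive blocks B₁, …, B_{n/B} of size B, and let σ ∈ {−1,1}^n be a vector of independent uniform ±1 random variables. Define the (n/B)×n random matrix S by (Sv)_i = Σ_{j ∈ B_i} σ_j v_j. Then: (i) for every p ∈ [1, ∞), every n×n real matrix A, every x ∈ ℝ^n, and every realization of the signs, ‖SAx‖_p ≤ B^{1−1/p}·‖Ax‖_p; and (ii) for every p ∈ [1, 2] there is a constant C_p > 0 (depending only on p) such that for every A and x, ‖Ax‖_p^p ≤ C_p·B^{1−p/2}·E_σ[‖SAx‖_p^p], where the expectation is over the random signs σ. -/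
open MeasureTheory ENNReal

/-- The uniform ±1 distribution on ℝ. -/
noncomputable def signMeasure : Measure ℝ :=
  (1/2 : ℝ≥0∞) • Measure.dirac 1 + (1/2 : ℝ≥0∞) • Measure.dirac (-1)

/-- The distribution of a vector of n independent uniform ±1 signs. -/
noncomputable def signVec (n : ℕ) : Measure (Fin n → ℝ) :=
  Measure.pi fun _ : Fin n => signMeasure

/-- The (n/B)×n block sign-sum matrix: (Sv)_i = Σ_{j ∈ B_i} σ_j v_j where B_i is the i-th
consecutive block of size B of [n] (those j with ⌊j/B⌋ = i). -/
def blockSignRow (n B : ℕ) (σ : Fin n → ℝ) : Matrix (Fin (n / B)) (Fin n) ℝ :=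
  Matrix.of fun i j => if (j : ℕ) / B = (i : ℕ) then σ j else 0

/-- The consecutive block of indices `j` with `⌊j / B⌋ = i`. -/
def signBlock (n B : ℕ) (i : Fin (n / B)) : Finset (Fin n) :=
  Finset.univ.filter fun j => (j : ℕ) / B = (i : ℕ)

theorem card_signBlock_le {n B : ℕ} (hB : 0 < B) (i : Fin (n / B)) :
    (signBlock n B i).card ≤ B := by
  have h : (signBlock n B i).card ≤ (Finset.Ico ((i : ℕ) * B) (((i : ℕ) + 1) * B)).card := by
    refine Finset.card_le_card_of_injOn (fun j => (j : ℕ)) ?_ Fin.val_injective.injOn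
    intro j hj
    simp only [signBlock, Finset.coe_filter, Finset.mem_univ, true_and, Set.mem_ofPred_eq] at hj
    simp only [Finset.coe_Ico, Set.mem_Ico]
    rw [← hj]
    exact ⟨Nat.div_mul_le_self _ _, by
      have := Nat.lt_div_mul_add (a := (j : ℕ)) hB
      linarith⟩
  refine h.trans (le_of_eq ?_)
  rw [Nat.card_Ico, Nat.add_mul, one_mul, Nat.add_sub_cancel_left]

theorem sum_signBlock {n B : ℕ} (hBn : B ∣ n) (f : Fin n → ℝ) :
    ∑ i, ∑ j ∈ signBlock n B i, f j = ∑ j, f j := by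
  have hlt (j : Fin n) : (j : ℕ) / B < n / B :=
    Nat.div_lt_div_of_lt_of_dvd hBn j.isLt
  rw [← Finset.sum_fiberwise Finset.univ (fun j : Fin n => (⟨(j : ℕ) / B, hlt j⟩ : Fin (n / B))) f]
  simp only [signBlock, Fin.ext_iff]

theorem blockSignRow_mulVec {n B : ℕ} (σ v : Fin n → ℝ) (i : Fin (n / B)) :
    (blockSignRow n B σ).mulVec v i = ∑ j ∈ signBlock n B i, σ j * v j := by
  simp [blockSignRow, Matrix.mulVec, dotProduct, signBlock, Finset.sum_filter, ite_mul]

theorem lpNorm_ofReal {p : ℝ} (hp : 1 ≤ p) {n : ℕ} (x : Fin n → ℝ) :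
    lpNorm (ENNReal.ofReal p) x = (∑ i, |x i| ^ p) ^ (1 / p) := by
  rw [_root_.lpNorm, if_neg ENNReal.ofReal_ne_top, ENNReal.toReal_ofReal (by linarith)]

theorem lpNorm_ofReal_rpow {p : ℝ} (hp : 1 ≤ p) {n : ℕ} (x : Fin n → ℝ) :
    lpNorm (ENNReal.ofReal p) x ^ p = ∑ i, |x i| ^ p := by
  have h : 0 ≤ ∑ i, |x i| ^ p := Finset.sum_nonneg fun i _ => by positivity
  rw [lpNorm_ofReal hp, ← Real.rpow_mul h, one_div_mul_cancel (by linarith), Real.rpow_one]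

theorem abs_blockSignRow_mulVec_rpow_le {p : ℝ} (hp : 1 ≤ p) {n B : ℕ} (hB : 0 < B)
    (σ v : Fin n → ℝ) (hσ : ∀ j, σ j = 1 ∨ σ j = -1) (i : Fin (n / B)) :
    |(blockSignRow n B σ).mulVec v i| ^ p
      ≤ (B : ℝ) ^ (p - 1) * ∑ j ∈ signBlock n B i, |v j| ^ p := by
  have habs : |(blockSignRow n B σ).mulVec v i| ≤ ∑ j ∈ signBlock n B i, |v j| := by
    rw [blockSignRow_mulVec]
    refine (Finset.abs_sum_le_sum_abs _ _).trans (Finset.sum_le_sum fun j _ => ?_)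
    rcases hσ j with h | h <;> simp [h]
  have hcard : ((signBlock n B i).card : ℝ) ≤ B := by exact_mod_cast card_signBlock_le hB i
  calc |(blockSignRow n B σ).mulVec v i| ^ p
      ≤ (∑ j ∈ signBlock n B i, |v j|) ^ p :=
        Real.rpow_le_rpow (abs_nonneg _) habs (by linarith)
    _ ≤ ((signBlock n B i).card : ℝ) ^ (p - 1) * ∑ j ∈ signBlock n B i, |v j| ^ p :=
        Real.rpow_sum_le_const_mul_sum_rpow _ _ hp
    _ ≤ (B : ℝ) ^ (p - 1) * ∑ j ∈ signBlock n B i, |v j| ^ p :=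
        mul_le_mul_of_nonneg_right
          (Real.rpow_le_rpow (Nat.cast_nonneg _) hcard (by linarith))
          (Finset.sum_nonneg fun _ _ => by positivity)

theorem lpNorm_blockSignRow_mulVec_le {p : ℝ} (hp : 1 ≤ p) {n B : ℕ} (hB : 0 < B) (hBn : B ∣ n)
    (v σ : Fin n → ℝ) (hσ : ∀ j, σ j = 1 ∨ σ j = -1) :
    lpNorm (ENNReal.ofReal p) ((blockSignRow n B σ).mulVec v)
      ≤ (B : ℝ) ^ (1 - 1 / p) * lpNorm (ENNReal.ofReal p) v := by
  have hp0 : p ≠ 0 := by linarith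
  have hsum : ∑ i, |(blockSignRow n B σ).mulVec v i| ^ p
      ≤ (B : ℝ) ^ (p - 1) * ∑ j, |v j| ^ p := by
    rw [← sum_signBlock hBn, Finset.mul_sum]
    exact Finset.sum_le_sum fun i _ => abs_blockSignRow_mulVec_rpow_le hp hB σ v hσ i
  rw [lpNorm_ofReal hp, lpNorm_ofReal hp]
  refine (Real.rpow_le_rpow (Finset.sum_nonneg fun _ _ => by positivity) hsum
    (by positivity)).trans (le_of_eq ?_)
  rw [Real.mul_rpow (by positivity) (Finset.sum_nonneg fun _ _ => by positivity),
    ← Real.rpow_mul (Nat.cast_nonneg _)]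
  congr 2
  field_simp

instance isProbabilityMeasure_signMeasure : IsProbabilityMeasure signMeasure :=
  ⟨by simp [signMeasure, ENNReal.inv_two_add_inv_two]⟩

instance isProbabilityMeasure_signVec (n : ℕ) : IsProbabilityMeasure (signVec n) := by
  unfold signVec; infer_instance

theorem ae_signMeasure : ∀ᵐ t ∂signMeasure, t = 1 ∨ t = -1 := by
  simp [signMeasure, ae_add_measure_iff, ae_dirac_eq]

theorem ae_signVec (n : ℕ) : ∀ᵐ σ ∂signVec n, ∀ j, σ j = 1 ∨ σ j = -1 := by
  rw [ae_all_iff]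
  intro j
  exact (measurePreserving_eval (fun _ : Fin n => signMeasure) j).quasiMeasurePreserving.ae
    ae_signMeasure

theorem Continuous.integrable_signVec {n : ℕ} {f : (Fin n → ℝ) → ℝ} (hf : Continuous f) :
    Integrable f (signVec n) := by
  have hmem : ∀ᵐ σ ∂signVec n, σ ∈ Set.Icc (-1 : Fin n → ℝ) 1 := by
    filter_upwards [ae_signVec n] with σ hσ
    constructor <;> intro j <;> rcases hσ j with h | h <;> simp [h]
  rw [← Measure.restrict_eq_self_of_ae_mem hmem]
  exact hf.continuousOn.integrableOn_compact isCompact_Icc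

theorem measurePreserving_neg_signMeasure :
    MeasurePreserving (fun t : ℝ => -t) signMeasure signMeasure := by
  refine ⟨measurable_neg, ?_⟩
  rw [signMeasure, Measure.map_add _ _ measurable_neg, Measure.map_smul, Measure.map_smul,
    Measure.map_dirac' measurable_neg, Measure.map_dirac' measurable_neg, neg_neg, add_comm]

/-- The sign distribution is invariant under flipping one coordinate. -/
theorem integral_signVec_flip {n : ℕ} (a : Fin n) {f : (Fin n → ℝ) → ℝ} (hf : Continuous f) :
    ∫ σ, f (fun j => if j = a then -σ j else σ j) ∂signVec n = ∫ σ, f σ ∂signVec n := by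
  have hmp : MeasurePreserving
      (fun (σ : Fin n → ℝ) j => (if j = a then (fun t : ℝ => -t) else id) (σ j))
      (signVec n) (signVec n) := by
    refine measurePreserving_pi _ _ fun j => ?_
    split_ifs
    · exact measurePreserving_neg_signMeasure
    · exact MeasurePreserving.id _
  have h := integral_map hmp.measurable.aemeasurable (μ := signVec n) (f := f)
    hf.aestronglyMeasurable
  rw [hmp.map_eq] at h
  rw [h]
  refine integral_congr_ae (Filter.Eventually.of_forall fun σ => ?_)
  dsimp only
  congr 1
  ext j
  split_ifs <;> rfl

theorem continuous_signSum {n : ℕ} (v : Fin n → ℝ) (s : Finset (Fin n)) :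
    Continuous fun σ : Fin n → ℝ => ∑ j ∈ s, σ j * v j := by
  fun_prop

theorem integrable_signSum_pow {n : ℕ} (v : Fin n → ℝ) (s : Finset (Fin n)) (k : ℕ) :
    Integrable (fun σ : Fin n → ℝ => (∑ j ∈ s, σ j * v j) ^ k) (signVec n) :=
  Continuous.integrable_signVec ((continuous_signSum v s).pow k)

/-- Averaging a function of a sign sum over one sign. -/
theorem integral_signSum_insert {n : ℕ} (v : Fin n → ℝ) {s : Finset (Fin n)} {a : Fin n}
    (ha : a ∉ s) {g : ℝ → ℝ} (hg : Continuous g) :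
    ∫ σ, g (∑ j ∈ insert a s, σ j * v j) ∂signVec n
      = ∫ σ, (g (∑ j ∈ s, σ j * v j + v a) + g (∑ j ∈ s, σ j * v j - v a)) / 2 ∂signVec n := by
  have hf : Continuous fun σ : Fin n → ℝ => g (∑ j ∈ insert a s, σ j * v j) :=
    hg.comp (continuous_signSum v _)
  have hf' : Continuous fun σ : Fin n → ℝ =>
      g (∑ j ∈ insert a s, (if j = a then -σ j else σ j) * v j) := by
    refine hg.comp (continuous_finsetSum _ fun j _ => ?_)
    split_ifs <;> fun_prop
  have hflip := integral_signVec_flip a hf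
  have hhalf : ∫ σ, g (∑ j ∈ insert a s, σ j * v j) ∂signVec n
      = ∫ σ, (g (∑ j ∈ insert a s, σ j * v j)
          + g (∑ j ∈ insert a s, (if j = a then -σ j else σ j) * v j)) / 2 ∂signVec n := by
    rw [integral_div, integral_add hf.integrable_signVec hf'.integrable_signVec, hflip]
    ring
  rw [hhalf]
  refine integral_congr_ae ?_
  filter_upwards [ae_signVec n] with σ hσ
  have hs : ∑ j ∈ s, (if j = a then -σ j else σ j) * v j = ∑ j ∈ s, σ j * v j :=
    Finset.sum_congr rfl fun j hj => by rw [if_neg (ne_of_mem_of_not_mem hj ha)]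
  rw [Finset.sum_insert ha, Finset.sum_insert ha, hs, if_pos rfl]
  rcases hσ a with h | h <;> rw [h] <;> ring_nf

theorem integral_signSum_sq {n : ℕ} (v : Fin n → ℝ) (s : Finset (Fin n)) :
    ∫ σ, (∑ j ∈ s, σ j * v j) ^ 2 ∂signVec n = ∑ j ∈ s, v j ^ 2 := by
  induction s using Finset.induction_on with
  | empty => simp
  | insert a s ha ih =>
    rw [integral_signSum_insert v ha (g := fun t => t ^ 2) (by fun_prop), Finset.sum_insert ha,
      ← ih]
    have h (σ : Fin n → ℝ) : ((∑ j ∈ s, σ j * v j + v a) ^ 2 + (∑ j ∈ s, σ j * v j - v a) ^ 2) / 2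
        = v a ^ 2 + (∑ j ∈ s, σ j * v j) ^ 2 := by ring
    simp only [h]
    rw [integral_add (integrable_const _) (integrable_signSum_pow v s 2)]
    simp

theorem integral_signSum_pow_four_le {n : ℕ} (v : Fin n → ℝ) (s : Finset (Fin n)) :
    ∫ σ, (∑ j ∈ s, σ j * v j) ^ 4 ∂signVec n ≤ 3 * (∑ j ∈ s, v j ^ 2) ^ 2 := by
  induction s using Finset.induction_on with
  | empty => simp
  | insert a s ha ih =>
    rw [integral_signSum_insert v ha (g := fun t => t ^ 4) (by fun_prop), Finset.sum_insert ha]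
    have h (σ : Fin n → ℝ) : ((∑ j ∈ s, σ j * v j + v a) ^ 4 + (∑ j ∈ s, σ j * v j - v a) ^ 4) / 2
        = v a ^ 4 + (6 * v a ^ 2 * (∑ j ∈ s, σ j * v j) ^ 2 + (∑ j ∈ s, σ j * v j) ^ 4) := by ring
    simp only [h]
    have h2 := integrable_signSum_pow v s 2
    have h4 := integrable_signSum_pow v s 4
    have h24 : Integrable (fun σ : Fin n → ℝ => 6 * v a ^ 2 * (∑ j ∈ s, σ j * v j) ^ 2
        + (∑ j ∈ s, σ j * v j) ^ 4) (signVec n) := (h2.const_mul _).add h4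
    rw [integral_add (integrable_const _) h24,
      integral_add (h2.const_mul _) h4, integral_const_mul, integral_signSum_sq]
    simp only [integral_const, probReal_univ, one_smul]
    nlinarith [sq_nonneg (v a ^ 2)]

theorem sq_le_rpow_add_pow_four {p : ℝ} (hp2 : p ≤ 2) {T : ℝ} (hT : 0 < T) (z : ℝ) :
    z ^ 2 ≤ T ^ (1 - p / 2) * |z| ^ p + z ^ 4 / T := by
  rcases le_or_gt (z ^ 2) T with h | h
  · have h4 : 0 ≤ z ^ 4 / T := by positivity
    rcases eq_or_ne z 0 with rfl | hz
    · have : 0 ≤ T ^ (1 - p / 2) * |(0 : ℝ)| ^ p := by positivity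
      simpa using this
    have hz0 : 0 < |z| := abs_pos.mpr hz
    have hle : |z| ^ (2 - p) ≤ T ^ (1 - p / 2) := by
      have := Real.rpow_le_rpow (sq_nonneg z) h (show 0 ≤ 1 - p / 2 by linarith)
      rwa [← sq_abs, ← Real.rpow_natCast, ← Real.rpow_mul (abs_nonneg z),
        show ((2 : ℕ) : ℝ) * (1 - p / 2) = 2 - p by push_cast; ring] at this
    have heq : z ^ 2 = |z| ^ (2 - p) * |z| ^ p := by
      rw [← Real.rpow_add hz0, sub_add_cancel, Real.rpow_two, sq_abs]
    have := mul_le_mul_of_nonneg_right hle (show 0 ≤ |z| ^ p by positivity)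
    linarith
  · have h1 : z ^ 2 ≤ z ^ 4 / T := by
      rw [le_div_iff₀ hT]
      nlinarith [sq_nonneg z]
    have h2 : 0 ≤ T ^ (1 - p / 2) * |z| ^ p := by positivity
    linarith

/-- Lower Khintchine inequality for exponents in `[1, 2]`. -/
theorem rpow_sum_sq_le_integral_signSum {p : ℝ} (hp : 1 ≤ p) (hp2 : p ≤ 2) {n : ℕ}
    (v : Fin n → ℝ) (s : Finset (Fin n)) :
    (∑ j ∈ s, v j ^ 2) ^ (p / 2)
      ≤ 2 * 6 ^ (1 - p / 2) * ∫ σ, |∑ j ∈ s, σ j * v j| ^ p ∂signVec n := by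
  have hI : 0 ≤ ∫ σ, |∑ j ∈ s, σ j * v j| ^ p ∂signVec n :=
    integral_nonneg fun σ => by positivity
  have hQ : 0 ≤ ∑ j ∈ s, v j ^ 2 := Finset.sum_nonneg fun j _ => sq_nonneg _
  have hsq := integral_signSum_sq v s
  have hfour := integral_signSum_pow_four_le v s
  set Q := ∑ j ∈ s, v j ^ 2
  rcases hQ.eq_or_lt with hQ0 | hQ0
  · rw [← hQ0, Real.zero_rpow (by linarith)]
    positivity
  have hcont := continuous_signSum v s
  have hip : Integrable (fun σ : Fin n → ℝ => |∑ j ∈ s, σ j * v j| ^ p) (signVec n) :=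
    Continuous.integrable_signVec (hcont.abs.rpow_const fun _ => Or.inr (by linarith))
  have hi2 := integrable_signSum_pow v s 2
  have hi4 := integrable_signSum_pow v s 4
  have hmain := integral_mono hi2 ((hip.const_mul ((6 * Q) ^ (1 - p / 2))).add
    (hi4.div_const (6 * Q))) fun σ => sq_le_rpow_add_pow_four hp2 (by positivity) _
  simp only [Pi.add_apply] at hmain
  rw [integral_add (hip.const_mul _) (hi4.div_const _), integral_const_mul, integral_div, hsq]
    at hmain
  set I := ∫ σ, |∑ j ∈ s, σ j * v j| ^ p ∂signVec n
  have hdiv : (∫ σ, (∑ j ∈ s, σ j * v j) ^ 4 ∂signVec n) / (6 * Q) ≤ Q / 2 := by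
    rw [div_le_iff₀ (by positivity)]
    linarith
  rw [Real.mul_rpow (by norm_num) hQ] at hmain
  have hprod : Q ^ (1 - p / 2) * Q ^ (p / 2) = Q := by
    rw [← Real.rpow_add hQ0, sub_add_cancel, Real.rpow_one]
  refine le_of_mul_le_mul_left ?_ (Real.rpow_pos_of_pos hQ0 (1 - p / 2))
  rw [hprod]
  linarith

theorem sum_signBlock_abs_rpow_le {p : ℝ} (hp : 1 ≤ p) (hp2 : p ≤ 2) {n B : ℕ} (hB : 0 < B)
    (v : Fin n → ℝ) (i : Fin (n / B)) :
    ∑ j ∈ signBlock n B i, |v j| ^ p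
      ≤ (B : ℝ) ^ (1 - p / 2) * (∑ j ∈ signBlock n B i, v j ^ 2) ^ (p / 2) := by
  have hp0 : p ≠ 0 := by linarith
  have hS : 0 ≤ ∑ j ∈ signBlock n B i, |v j| ^ p := Finset.sum_nonneg fun _ _ => by positivity
  have hQ : 0 ≤ ∑ j ∈ signBlock n B i, v j ^ 2 := Finset.sum_nonneg fun _ _ => sq_nonneg _
  have hcard : ((signBlock n B i).card : ℝ) ≤ B := by exact_mod_cast card_signBlock_le hB i
  have hr : 1 ≤ 2 / p := by rw [le_div_iff₀ (by linarith)]; linarith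
  have h := Real.rpow_sum_le_const_mul_sum_rpow (signBlock n B i) (fun j => |v j| ^ p) hr
  have hterm (j : Fin n) : |(|v j| ^ p)| ^ (2 / p) = v j ^ 2 := by
    rw [abs_of_nonneg (by positivity), ← Real.rpow_mul (abs_nonneg _), mul_div_cancel₀ _ hp0,
      Real.rpow_two, sq_abs]
  have hterm' (j : Fin n) : |(|v j| ^ p)| = |v j| ^ p := abs_of_nonneg (by positivity)
  simp only [hterm] at h
  simp only [hterm'] at h
  have h' := Real.rpow_le_rpow (by positivity) h (show 0 ≤ p / 2 by linarith)
  rw [← Real.rpow_mul hS, show 2 / p * (p / 2) = 1 by field_simp, Real.rpow_one,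
    Real.mul_rpow (by positivity) hQ, ← Real.rpow_mul (Nat.cast_nonneg _),
    show (2 / p - 1) * (p / 2) = 1 - p / 2 by field_simp] at h'
  exact h'.trans (mul_le_mul_of_nonneg_right
    (Real.rpow_le_rpow (Nat.cast_nonneg _) hcard (by linarith)) (by positivity))

theorem lpNorm_rpow_le_integral_blockSignRow {p : ℝ} (hp : 1 ≤ p) (hp2 : p ≤ 2) {n B : ℕ}
    (hB : 0 < B) (hBn : B ∣ n) (v : Fin n → ℝ) :
    lpNorm (ENNReal.ofReal p) v ^ p
      ≤ 2 * 6 ^ (1 - p / 2) * (B : ℝ) ^ (1 - p / 2) *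
        ∫ σ, lpNorm (ENNReal.ofReal p) ((blockSignRow n B σ).mulVec v) ^ p ∂signVec n := by
  simp only [lpNorm_ofReal_rpow hp, blockSignRow_mulVec]
  rw [integral_finsetSum _ fun i _ => Continuous.integrable_signVec
      ((continuous_signSum v _).abs.rpow_const fun _ => Or.inr (by linarith)),
    ← sum_signBlock hBn, Finset.mul_sum]
  refine Finset.sum_le_sum fun i _ => (sum_signBlock_abs_rpow_le hp hp2 hB v i).trans ?_
  have := mul_le_mul_of_nonneg_left (rpow_sum_sq_le_integral_signSum hp hp2 v (signBlock n B i))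
    (show 0 ≤ (B : ℝ) ^ (1 - p / 2) by positivity)
  linarith

/-- For the (n/B)×n random block sign-sum sketch S:
(i) for every p ∈ [1,∞), n×n matrix A, x ∈ ℝ^n and every realization of the ±1 signs,
‖SAx‖_p ≤ B^{1−1/p}·‖Ax‖_p; and
(ii) for every p ∈ [1,2] there is a constant C_p > 0 depending only on p such that for
every n, B with B ∣ n, every A and x, ‖Ax‖_p^p ≤ C_p·B^{1−p/2}·E_σ[‖SAx‖_p^p]. -/
theorem blockSignRow_sketch_bounds :
    (∀ p : ℝ, 1 ≤ p →
      ∀ (n B : ℕ), 0 < n → 0 < B → B ∣ n →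
        ∀ (A : Matrix (Fin n) (Fin n) ℝ) (x : Fin n → ℝ) (σ : Fin n → ℝ),
          (∀ j, σ j = 1 ∨ σ j = -1) →
          lpNorm (ENNReal.ofReal p) ((blockSignRow n B σ).mulVec (A.mulVec x))
            ≤ (B : ℝ) ^ (1 - 1 / p) * lpNorm (ENNReal.ofReal p) (A.mulVec x)) ∧
    (∀ p : ℝ, 1 ≤ p → p ≤ 2 →
      ∃ C : ℝ, 0 < C ∧
        ∀ (n B : ℕ), 0 < n → 0 < B → B ∣ n →
          ∀ (A : Matrix (Fin n) (Fin n) ℝ) (x : Fin n → ℝ),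
            lpNorm (ENNReal.ofReal p) (A.mulVec x) ^ p
              ≤ C * (B : ℝ) ^ (1 - p / 2) *
                ∫ σ, lpNorm (ENNReal.ofReal p) ((blockSignRow n B σ).mulVec (A.mulVec x)) ^ p
                  ∂(signVec n)) := by
  refine ⟨fun p hp n B _ hB hBn A x σ hσ =>
    lpNorm_blockSignRow_mulVec_le hp hB hBn (A.mulVec x) σ hσ, fun p hp hp2 =>
    ⟨2 * 6 ^ (1 - p / 2), by positivity, fun n B _ hB hBn A x =>
      lpNorm_rpow_le_integral_blockSignRow hp hp2 hB hBn (A.mulVec x)⟩⟩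
end
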